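/- Let 𝓗 be a hyperplane arrangement in general position in ℝ^d, S a set of chambers, e ∈ [n], S⁺ := {C ∈ S : C ⊂ H_e⁺}, S⁻ := {C ∈ S : C ⊂ H_e⁻}, and fix A ⊆ [n] with e ∉ A and A ∈ supp(S). Define the bipartite graph Γ_{A,e} with vertex set conn(T_{S⁺}(A)) ⊔ conn(T_{S⁻}(A)) and edge set conn(T_S(A ∪ {e})), where an edge D ∈ conn(T_S(A ∪ {e})) joins the unique component of T_{S⁺}(A) whose boundary contains D to the unique component of T_{S⁻}(A) whose boundary contains D. Then: (i) the connected components of Γ_{A,e} are in bijection with conn(T_S(A)); and (ii) |conn(T_{S⁺}(A))| + |conn(T_{S⁻}(A))| ≤ |conn(T_S(A))| + |conn(T_S(A ∪ {e}))|. -/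

import Mathlib

open Set Topology

noncomputable section

/-- A hyperplane arrangement of `n` affine hyperplanes in `ℝ^d`, given by
nonzero normal vectors and offsets: the `i`-th hyperplane is
`{x | ∑ j, normal i j * x j = offset i}`. -/
structure Arrangement (d n : ℕ) where
  normal : Fin n → (Fin d → ℝ)
  offset : Fin n → ℝ
  normal_ne : ∀ i, normal i ≠ 0

/-- The thickening (regular open hull) `T_S` of a set `S` of chambers. -/
def thickening {d : ℕ} (S : Set (Set (Fin d → ℝ))) : Set (Fin d → ℝ) :=
  interior (closure (⋃ C ∈ S, C))

/-- The set of connected components of a subset `X` of a topological space. -/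
def connComps {α : Type*} [TopologicalSpace α] (X : Set α) : Set (Set α) :=
  {c | ∃ x ∈ X, c = connectedComponentIn X x}

namespace Arrangement

variable {d n : ℕ} (𝓗 : Arrangement d n)

/-- The `i`-th hyperplane of the arrangement. -/
def H (i : Fin n) : Set (Fin d → ℝ) := {x | ∑ j, 𝓗.normal i j * x j = 𝓗.offset i}

/-- The positive open half-space determined by the `i`-th hyperplane. -/
def pos (i : Fin n) : Set (Fin d → ℝ) := {x | 𝓗.offset i < ∑ j, 𝓗.normal i j * x j}

/-- The negative open half-space determined by the `i`-th hyperplane. -/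
def neg (i : Fin n) : Set (Fin d → ℝ) := {x | ∑ j, 𝓗.normal i j * x j < 𝓗.offset i}

/-- The complement of the union of the hyperplanes. -/
def free : Set (Fin d → ℝ) := {x | ∀ i, x ∉ 𝓗.H i}

/-- The chambers: connected components of the complement of the hyperplanes. -/
def chambers : Set (Set (Fin d → ℝ)) :=
  {C | ∃ x ∈ 𝓗.free, C = connectedComponentIn 𝓗.free x}

/-- General position: the normals of any `≤ d` hyperplanes are linearly independent
(so that their intersection is an affine subspace of the right dimension), and no
`d+1` hyperplanes have a common point. -/
def GeneralPosition : Prop :=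
  (∀ A : Finset (Fin n), A.card ≤ d →
      LinearIndependent ℝ (fun i : A => 𝓗.normal i.1)) ∧
  (∀ A : Finset (Fin n), A.card = d + 1 → (⋂ i ∈ A, 𝓗.H i) = ∅)

/-- Hyperplane `e` separates `C` from `C'`. -/
def Separates (e : Fin n) (C C' : Set (Fin d → ℝ)) : Prop :=
  (C ⊆ 𝓗.pos e ∧ C' ⊆ 𝓗.neg e) ∨ (C ⊆ 𝓗.neg e ∧ C' ⊆ 𝓗.pos e)

/-- Adjacency in the chamber graph: two chambers are adjacent iff they are separated
by exactly one hyperplane (equivalently, share a common facet). -/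
def Adj (C C' : Set (Fin d → ℝ)) : Prop :=
  C ∈ 𝓗.chambers ∧ C' ∈ 𝓗.chambers ∧ ∃! e : Fin n, 𝓗.Separates e C C'

/-- The edge boundary of a set `S` of chambers, encoded as the set of ordered pairs
`(C, C')` of adjacent chambers with `C ∈ S` and `C' ∉ S` (each boundary edge is thus
counted exactly once). -/
def edgeBoundary (S : Set (Set (Fin d → ℝ))) :
    Set ((Set (Fin d → ℝ)) × (Set (Fin d → ℝ))) :=
  {q | q.1 ∈ S ∧ q.2 ∉ S ∧ 𝓗.Adj q.1 q.2}

/-- The stratum `T_S(A) = T_S ∩ L_A`. -/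
def stratum (S : Set (Set (Fin d → ℝ))) (A : Finset (Fin n)) : Set (Fin d → ℝ) :=
  thickening S ∩ ⋂ i ∈ A, 𝓗.H i

/-- The support of `S`: those `A` with nonempty stratum. -/
def supp (S : Set (Set (Fin d → ℝ))) : Set (Finset (Fin n)) :=
  {A | (𝓗.stratum S A).Nonempty}

/-- `H_f` bounds the stratum `T_S(A)`: the stratum lies entirely in one of the open
half-spaces of `H_f`, and `H_f` meets the closure of the stratum within `L_A`. -/
def Bounds (f : Fin n) (S : Set (Set (Fin d → ℝ))) (A : Finset (Fin n)) : Prop :=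
  (𝓗.stratum S A ⊆ 𝓗.pos f ∨ 𝓗.stratum S A ⊆ 𝓗.neg f) ∧
  (𝓗.H f ∩ closure (𝓗.stratum S A) ∩ ⋂ i ∈ A, 𝓗.H i).Nonempty

/-- `S` is strata-connected if every nonempty stratum is connected. -/
def StrataConnected (S : Set (Set (Fin d → ℝ))) : Prop :=
  ∀ A ∈ 𝓗.supp S, IsConnected (𝓗.stratum S A)

end Arrangement

/-- The generalized binomial coefficient `C(x, i) = x(x-1)⋯(x-i+1)/i!`. -/
noncomputable def gchoose (x : ℝ) (i : ℕ) : ℝ :=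
  (∏ j ∈ Finset.range i, (x - j)) / (Nat.factorial i)

/-- The gluing graph `Γ_{A,e}`: vertices are the connected components of
`T_{S⁺}(A)` and of `T_{S⁻}(A)`, and two vertices are adjacent iff some connected
component `D` of `T_S(A ∪ {e})` lies in the closure of both. -/
def gluingGraph {d n : ℕ} (𝓗 : Arrangement d n) (S : Set (Set (Fin d → ℝ)))
    (e : Fin n) (A : Finset (Fin n)) :
    SimpleGraph ((connComps (𝓗.stratum {C ∈ S | C ⊆ 𝓗.pos e} A)) ⊕
      (connComps (𝓗.stratum {C ∈ S | C ⊆ 𝓗.neg e} A))) where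
  Adj u v := u ≠ v ∧ ∃ D ∈ connComps (𝓗.stratum S (insert e A)),
      D ⊆ closure (Sum.elim Subtype.val Subtype.val u) ∧
      D ⊆ closure (Sum.elim Subtype.val Subtype.val v)
  symm := by
    constructor
    rintro u v ⟨huv, D, hD, h1, h2⟩
    exact ⟨huv.symm, D, hD, h2, h1⟩
  loopless := by
    constructor
    rintro u ⟨h, -⟩
    exact h rfl

/-! The hyperplane `H_e` cuts the stratum `X = T_S(A)` into two open sides which, near any point
of `X`, are convex. Hence at most one component of each side accumulates at a given point, and the
closures in `X` of the components of both sides form a locally finite cover of `X` by connected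
closed sets. Two of them meet exactly when they are adjacent in `Γ_{A,e}`, so the components of
the graph are those of `X`. The inequality follows since a finite graph has at most as many
vertices as components and edges together, and each edge comes from a component of `X ∩ H_e =
T_S(A ∪ {e})`. -/

section Graph

theorem card_le_card_connectedComponent_add_card_edgeSet {V : Type*} [Finite V]
    (G : SimpleGraph V) :
    Nat.card V ≤ Nat.card G.ConnectedComponent + Nat.card G.edgeSet := by
  -- Joining a new vertex `none` to one vertex of each component makes the graph connected.
  let join : G.ConnectedComponent → Sym2 (Option V) := fun c => s(none, some c.out)
  let G' : SimpleGraph (Option V) := G.map Function.Embedding.some ⊔ .fromEdgeSet (range join)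
  have hreach (v : V) : G'.Reachable none (some v) := by
    have hjoin : G'.Adj none (some (G.connectedComponentMk v).out) :=
      Or.inr ⟨⟨_, rfl⟩, Option.some_ne_none _ |>.symm⟩
    have hv : G.Reachable (G.connectedComponentMk v).out v :=
      SimpleGraph.ConnectedComponent.exact (Quot.out_eq _)
    exact hjoin.reachable.trans <|
      (hv.map (SimpleGraph.Embedding.map Function.Embedding.some G).toHom).mono le_sup_left
  have hconn : G'.Connected := (SimpleGraph.connected_iff_exists_forall_reachable G').2
    ⟨none, Option.forall.2 ⟨.rfl, hreach⟩⟩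
  have hedges : G'.edgeSet ⊆ Sym2.map some '' G.edgeSet ∪ range join := by
    rw [SimpleGraph.edgeSet_sup, SimpleGraph.edgeSet_map, SimpleGraph.edgeSet_fromEdgeSet]
    exact union_subset_union subset_rfl sdiff_subset
  have hcard := calc
    Nat.card V + 1 = Nat.card (Option V) := Finite.card_option.symm
    _ ≤ Nat.card G'.edgeSet + 1 := hconn.card_vert_le_card_edgeSet_add_one
    _ ≤ (Sym2.map some '' G.edgeSet ∪ range join).ncard + 1 := by
      gcongr; exact ncard_le_ncard hedges
    _ ≤ (Nat.card G.edgeSet + Nat.card G.ConnectedComponent) + 1 := by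
      gcongr
      exact (ncard_union_le _ _).trans (add_le_add ncard_image_le (Finite.card_range_le join))
  omega

end Graph

section ConnComps

variable {α : Type*} [TopologicalSpace α] {X s c c' : Set α}

theorem subset_of_mem_connComps (hc : c ∈ connComps X) : c ⊆ X := by
  obtain ⟨x, -, rfl⟩ := hc
  exact connectedComponentIn_subset X x

theorem isConnected_of_mem_connComps (hc : c ∈ connComps X) : IsConnected c := by
  obtain ⟨x, hx, rfl⟩ := hc
  exact isConnected_connectedComponentIn_iff.2 hx

theorem subset_of_mem_connComps_of_isPreconnected (hc : c ∈ connComps X) (hs : IsPreconnected s)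
    (hsX : s ⊆ X) (hsc : (s ∩ c).Nonempty) : s ⊆ c := by
  obtain ⟨x, -, rfl⟩ := hc
  obtain ⟨y, hys, hyx⟩ := hsc
  rw [connectedComponentIn_eq hyx]
  exact hs.subset_connectedComponentIn hys hsX

theorem eq_of_mem_connComps (hc : c ∈ connComps X) (hc' : c' ∈ connComps X)
    (h : (c ∩ c').Nonempty) : c = c' :=
  (subset_of_mem_connComps_of_isPreconnected hc' (isConnected_of_mem_connComps hc).isPreconnected
    (subset_of_mem_connComps hc) h).antisymm <|
  subset_of_mem_connComps_of_isPreconnected hc (isConnected_of_mem_connComps hc').isPreconnected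
    (subset_of_mem_connComps hc') (inter_comm c c' ▸ h)

theorem finite_connComps_of_isPreconnected_fibers {ι : Type*} [Finite ι] (f : α → ι)
    (hf : ∀ i, IsPreconnected (X ∩ f ⁻¹' {i})) : (connComps X).Finite := by
  choose pt hpt using fun c : connComps X => (isConnected_of_mem_connComps c.2).nonempty
  have hinj : Function.Injective (f ∘ pt) := by
    intro c c' hcc'
    have hsub : X ∩ f ⁻¹' {f (pt c')} ⊆ c := subset_of_mem_connComps_of_isPreconnected c.2 (hf _)
      inter_subset_left ⟨pt c, ⟨subset_of_mem_connComps c.2 (hpt c), hcc'⟩, hpt c⟩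
    exact Subtype.ext <| eq_of_mem_connComps c.2 c'.2
      ⟨pt c', hsub ⟨subset_of_mem_connComps c'.2 (hpt c'), rfl⟩, hpt c'⟩
  exact Finite.of_injective _ hinj

/-- The bijection between the two models of the connected components of the subspace `X`: points of
a quotient of `X`, and subsets of the ambient space. -/
def connectedComponentsEquivConnComps (X : Set α) : ConnectedComponents X ≃ connComps X :=
  have key (x y : X) : (x : ConnectedComponents X) = y ↔
      connectedComponentIn X (x : α) = connectedComponentIn X (y : α) := by
    rw [ConnectedComponents.coe_eq_coe, connectedComponentIn_eq_image x.2,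
      connectedComponentIn_eq_image y.2, Subtype.val_injective.image_injective.eq_iff]
  Equiv.ofBijective
    (Quotient.lift (fun x : X => ⟨connectedComponentIn X (x : α), x, x.2, rfl⟩)
      fun x y hxy => Subtype.ext ((key x y).1 (Quotient.sound hxy)))
    ⟨Quotient.ind₂ fun x y hxy => (key x y).2 (congrArg Subtype.val hxy),
      fun ⟨_, x, hx, h⟩ => ⟨(⟨x, hx⟩ : X), Subtype.ext h.symm⟩⟩

theorem isConnected_preimage_val_closure (hs : IsConnected s) (hsX : s ⊆ X) :
    IsConnected ((↑) ⁻¹' closure s : Set X) := by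
  obtain ⟨x, hx⟩ := hs.nonempty
  refine ⟨⟨⟨x, hsX hx⟩, subset_closure hx⟩, ?_⟩
  rw [← IsInducing.subtypeVal.isPreconnected_image, Subtype.image_preimage_coe]
  exact hs.isPreconnected.subset_closure (subset_inter hsX subset_closure) inter_subset_right

end ConnComps

section IntersectionGraph

/-- The intersection graph of a family of sets: `i ≠ j` are adjacent when `F i` meets `F j`. It
records how the members of a cover are glued together. -/
def intersectionGraph {ι α : Type*} (F : ι → Set α) : SimpleGraph ι where
  Adj i j := i ≠ j ∧ (F i ∩ F j).Nonempty
  symm := ⟨fun i j h => ⟨h.1.symm, inter_comm (F i) (F j) ▸ h.2⟩⟩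
  loopless := ⟨fun _ h => h.1 rfl⟩

variable {ι α : Type*} {F : ι → Set α}

theorem connectedComponentMk_intersectionGraph_eq {i j : ι} (h : (F i ∩ F j).Nonempty) :
    (intersectionGraph F).connectedComponentMk i =
      (intersectionGraph F).connectedComponentMk j := by
  rcases eq_or_ne i j with rfl | hij
  · rfl
  · exact SimpleGraph.ConnectedComponent.sound (SimpleGraph.Adj.reachable ⟨hij, h⟩)

variable [TopologicalSpace α]

theorem isClopen_biUnion_supp_intersectionGraph (hF : LocallyFinite F)
    (hclosed : ∀ i, IsClosed (F i)) (hcover : ⋃ i, F i = univ)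
    (c : (intersectionGraph F).ConnectedComponent) : IsClopen (⋃ i ∈ c.supp, F i) := by
  have hclosed_biUnion (I : Set ι) : IsClosed (⋃ i ∈ I, F i) := by
    rw [biUnion_eq_iUnion]
    exact (hF.comp_injective Subtype.val_injective).isClosed_iUnion fun i => hclosed i
  have hcompl : (⋃ i ∈ c.supp, F i)ᶜ = ⋃ i ∈ c.suppᶜ, F i := by
    refine IsCompl.compl_eq ⟨?_, ?_⟩
    · simp only [disjoint_iUnion_left, disjoint_iUnion_right]
      refine fun j hj i hi => not_not.1 fun hij => hj ?_
      have hmk := connectedComponentMk_intersectionGraph_eq (not_disjoint_iff_nonempty_inter.1 hij)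
      exact hmk.symm.trans hi
    · refine codisjoint_iff.2 (?_ : _ ∪ _ = univ)
      rw [← biUnion_union, union_compl_self, biUnion_univ, hcover]
  exact ⟨hclosed_biUnion _, isClosed_compl_iff.1 (hcompl ▸ hclosed_biUnion _)⟩

theorem nonempty_connectedComponent_intersectionGraph_equiv (hF : LocallyFinite F)
    (hclosed : ∀ i, IsClosed (F i)) (hconn : ∀ i, IsConnected (F i)) (hcover : ⋃ i, F i = univ) :
    Nonempty ((intersectionGraph F).ConnectedComponent ≃ ConnectedComponents α) := by
  choose pt hpt using fun i => (hconn i).nonempty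
  have hmk {i : ι} {x : α} (hx : x ∈ F i) : (pt i : ConnectedComponents α) = x :=
    ConnectedComponents.coe_eq_coe'.2 <|
      (hconn i).isPreconnected.subset_connectedComponent hx (hpt i)
  have hreach {i j : ι} (hij : (intersectionGraph F).Reachable i j) :
      (pt i : ConnectedComponents α) = pt j := by
    obtain ⟨p⟩ := hij
    induction p with
    | nil => rfl
    | cons h _ ih =>
      obtain ⟨-, x, hxi, hxj⟩ := h
      exact ((hmk hxi).trans (hmk hxj).symm).trans ih
  refine ⟨.ofBijective (SimpleGraph.ConnectedComponent.lift
    (fun i => (pt i : ConnectedComponents α)) fun _ _ p _ => hreach p.reachable) ⟨?_, ?_⟩⟩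
  · refine SimpleGraph.ConnectedComponent.ind₂ fun i j hij => ?_
    have hclopen := isClopen_biUnion_supp_intersectionGraph hF hclosed hcover
      ((intersectionGraph F).connectedComponentMk i)
    have hj := hclopen.connectedComponent_subset (mem_biUnion rfl (hpt i))
      (ConnectedComponents.coe_eq_coe'.1 hij.symm)
    obtain ⟨k, hk, hjk⟩ := mem_iUnion₂.1 hj
    exact hk.symm.trans (connectedComponentMk_intersectionGraph_eq ⟨pt j, hjk, hpt j⟩)
  · refine Quotient.ind fun x => ?_
    obtain ⟨i, hi⟩ := mem_iUnion.1 (hcover.ge (mem_univ x))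
    exact ⟨(intersectionGraph F).connectedComponentMk i, hmk hi⟩

end IntersectionGraph

section Unibranch

variable {α : Type*} [TopologicalSpace α] {P X u u' : Set α}

/-- `P` is unibranch along `X` if, near each point of `X`, it consists of a single connected piece
(possibly empty). Thus at most one component of `P` accumulates at any given point of `X`. -/
def UnibranchAlong (P X : Set α) : Prop :=
  ∀ x ∈ X, ∃ O ∈ 𝓝 x, IsPreconnected (O ∩ P)

namespace UnibranchAlong

theorem mono {X' : Set α} (h : UnibranchAlong P X) (hX : X' ⊆ X) :
    UnibranchAlong P X' :=
  fun x hx => h x (hX hx)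

theorem exists_isOpen_forall_eq (h : UnibranchAlong P X) {x : α} (hx : x ∈ X) :
    ∃ N, IsOpen N ∧ x ∈ N ∧ ∀ u ∈ connComps P, ∀ u' ∈ connComps P,
      (closure u ∩ N).Nonempty → (closure u' ∩ N).Nonempty → u = u' := by
  obtain ⟨O, hO, hOP⟩ := h x hx
  refine ⟨interior O, isOpen_interior, mem_interior_iff_mem_nhds.2 hO,
    fun u hu u' hu' huO hu'O => ?_⟩
  obtain ⟨y, hyu, hyO⟩ := (closure_inter_open_nonempty_iff isOpen_interior).1 huO
  obtain ⟨z, hzu', hzO⟩ := (closure_inter_open_nonempty_iff isOpen_interior).1 hu'O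
  have hOu : O ∩ P ⊆ u := subset_of_mem_connComps_of_isPreconnected hu hOP inter_subset_right
    ⟨y, ⟨interior_subset hyO, subset_of_mem_connComps hu hyu⟩, hyu⟩
  exact eq_of_mem_connComps hu hu'
    ⟨z, hOu ⟨interior_subset hzO, subset_of_mem_connComps hu' hzu'⟩, hzu'⟩

theorem locallyFinite (h : UnibranchAlong P X) :
    LocallyFinite fun u : connComps P => ((↑) ⁻¹' closure u.1 : Set X) := by
  rintro ⟨x, hx⟩
  obtain ⟨N, hN, hxN, huniq⟩ := h.exists_isOpen_forall_eq hx
  refine ⟨(↑) ⁻¹' N, (hN.preimage continuous_subtype_val).mem_nhds hxN, Subsingleton.finite ?_⟩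
  rintro u ⟨y, hyu, hyN⟩ u' ⟨z, hzu', hzN⟩
  exact Subtype.ext (huniq u u.2 u' u'.2 ⟨y, hyu, hyN⟩ ⟨z, hzu', hzN⟩)

theorem eq_of_mem_closure (h : UnibranchAlong P X) (hu : u ∈ connComps P) (hu' : u' ∈ connComps P)
    {x : α} (hx : x ∈ X) (hxu : x ∈ closure u) (hxu' : x ∈ closure u') : u = u' := by
  obtain ⟨N, -, hxN, huniq⟩ := h.exists_isOpen_forall_eq hx
  exact huniq u hu u' hu' ⟨x, hxu, hxN⟩ ⟨x, hxu', hxN⟩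

theorem exists_mem_closure (h : UnibranchAlong P X) {x : α} (hx : x ∈ X) (hxP : x ∈ closure P) :
    ∃ u : connComps P, x ∈ closure u.1 := by
  obtain ⟨O, hO, hOP⟩ := h x hx
  have hxOP : x ∈ closure (O ∩ P) := by
    rw [mem_closure_iff_frequently] at hxP ⊢
    exact (hxP.and_eventually hO).mono fun _ => And.symm
  obtain ⟨a, haO, haP⟩ := closure_nonempty_iff.1 ⟨x, hxOP⟩
  exact ⟨⟨connectedComponentIn P a, a, haP, rfl⟩,
    closure_mono (hOP.subset_connectedComponentIn ⟨haO, haP⟩ inter_subset_right) hxOP⟩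

theorem subset_closure_of_isPreconnected (h : UnibranchAlong P X) (hu : u ∈ connComps P)
    {D : Set α} (hD : IsPreconnected D) (hDX : D ⊆ X) (hDP : D ⊆ closure P)
    (hDu : (D ∩ closure u).Nonempty) : D ⊆ closure u := by
  -- Sending a point of `D` to the component of `P` accumulating there is locally constant.
  choose p hp using fun y : D => h.exists_mem_closure (hDX y.2) (hDP y.2)
  have hp_const : IsLocallyConstant p := by
    refine (IsLocallyConstant.iff_eventually_eq p).2 fun y => ?_
    obtain ⟨N, hN, hyN, huniq⟩ := h.exists_isOpen_forall_eq (hDX y.2)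
    filter_upwards [(hN.preimage continuous_subtype_val).mem_nhds hyN] with z hzN
    exact Subtype.ext (huniq _ (p z).2 _ (p y).2 ⟨z, hp z, hzN⟩ ⟨y, hp y, hyN⟩)
  have := isPreconnected_iff_preconnectedSpace.1 hD
  obtain ⟨x, hxD, hxu⟩ := hDu
  intro y hy
  have hpx : (p ⟨x, hxD⟩ : Set α) = u := h.eq_of_mem_closure (p _).2 hu (hDX hxD) (hp ⟨x, hxD⟩) hxu
  rw [← hpx, hp_const.apply_eq_of_preconnectedSpace ⟨x, hxD⟩ ⟨y, hy⟩]
  exact hp ⟨y, hy⟩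

end UnibranchAlong

theorem unibranchAlong_inter_of_convex {E : Type*} [AddCommGroup E] [Module ℝ E]
    [TopologicalSpace E] [IsTopologicalAddGroup E] [ContinuousSMul ℝ E] [LocallyConvexSpace ℝ E]
    {T K : Set E} (hT : IsOpen T) (hK : Convex ℝ K) : UnibranchAlong (T ∩ K) T := by
  intro x hx
  obtain ⟨O, ⟨hO, hOconv⟩, hOT⟩ :=
    (LocallyConvexSpace.convex_basis (𝕜 := ℝ) x).mem_iff.1 (hT.mem_nhds hx)
  refine ⟨O, hO, ?_⟩
  rw [← inter_assoc, inter_eq_left.2 (show O ⊆ T from hOT)]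
  exact (hOconv.inter hK).isPreconnected

end Unibranch

section Cut

/-- `Z` cuts `X` into the two sides `P` and `M`: their union is dense in `X`, each is unibranch
along `X`, and `Z` is where their closures meet inside `X`. -/
structure IsCut {α : Type*} [TopologicalSpace α] (X P M Z : Set α) : Prop where
  union_subset : P ∪ M ⊆ X
  subset_closure : X ⊆ closure P ∪ closure M
  unibranch_left : UnibranchAlong P X
  unibranch_right : UnibranchAlong M X
  inter_closure : X ∩ (closure P ∩ closure M) = Z

/-- The abstract form of `gluingGraph`: its vertices are the components of `P` and of `M`, and two
of them are adjacent when some component of `Z` lies in the closure of both. -/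
def componentGraph {α : Type*} [TopologicalSpace α] (P M Z : Set α) :
    SimpleGraph (connComps P ⊕ connComps M) where
  Adj u v := u ≠ v ∧ ∃ D ∈ connComps Z,
      D ⊆ closure (Sum.elim Subtype.val Subtype.val u) ∧
      D ⊆ closure (Sum.elim Subtype.val Subtype.val v)
  symm := ⟨fun _ _ ⟨huv, D, hD, hu, hv⟩ => ⟨huv.symm, D, hD, hv, hu⟩⟩
  loopless := ⟨fun _ h => h.1 rfl⟩

/-- The closure in `X` of a component of `P` or of `M`. These sets cover `X` when `X` is cut into
`P` and `M`. -/
def closedPiece {α : Type*} [TopologicalSpace α] (X : Set α) {P M : Set α}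
    (w : connComps P ⊕ connComps M) : Set X :=
  (↑) ⁻¹' closure (Sum.elim Subtype.val Subtype.val w)

namespace IsCut

variable {α : Type*} [TopologicalSpace α] {X P M Z : Set α}

theorem middle_subset (h : IsCut X P M Z) : Z ⊆ X :=
  h.inter_closure ▸ inter_subset_left

theorem isConnected_closedPiece (h : IsCut X P M Z) (w : connComps P ⊕ connComps M) :
    IsConnected (closedPiece X w) := by
  rcases w with u | m
  · exact isConnected_preimage_val_closure (isConnected_of_mem_connComps u.2)
      ((subset_of_mem_connComps u.2).trans (subset_union_left.trans h.union_subset))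
  · exact isConnected_preimage_val_closure (isConnected_of_mem_connComps m.2)
      ((subset_of_mem_connComps m.2).trans (subset_union_right.trans h.union_subset))

theorem locallyFinite_closedPiece (h : IsCut X P M Z) :
    LocallyFinite (closedPiece X : connComps P ⊕ connComps M → Set X) :=
  locallyFinite_sum.2 ⟨h.unibranch_left.locallyFinite, h.unibranch_right.locallyFinite⟩

theorem iUnion_closedPiece (h : IsCut X P M Z) :
    ⋃ w : connComps P ⊕ connComps M, closedPiece X w = univ := by
  refine eq_univ_of_forall fun x => mem_iUnion.2 ?_
  rcases h.subset_closure x.2 with hxP | hxM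
  · obtain ⟨u, hu⟩ := h.unibranch_left.exists_mem_closure x.2 hxP
    exact ⟨.inl u, hu⟩
  · obtain ⟨m, hm⟩ := h.unibranch_right.exists_mem_closure x.2 hxM
    exact ⟨.inr m, hm⟩

theorem componentGraph_adj_inl_inr (h : IsCut X P M Z) {u : connComps P} {m : connComps M} {x : α}
    (hx : x ∈ X) (hxu : x ∈ closure u.1) (hxm : x ∈ closure m.1) :
    (componentGraph P M Z).Adj (.inl u) (.inr m) := by
  have hxZ : x ∈ Z := h.inter_closure ▸ ⟨hx, closure_mono (subset_of_mem_connComps u.2) hxu,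
    closure_mono (subset_of_mem_connComps m.2) hxm⟩
  have hD : IsPreconnected (connectedComponentIn Z x) := isPreconnected_connectedComponentIn
  have hxD : x ∈ connectedComponentIn Z x := mem_connectedComponentIn hxZ
  have hDZ : connectedComponentIn Z x ⊆ X ∩ (closure P ∩ closure M) :=
    h.inter_closure ▸ connectedComponentIn_subset Z x
  exact ⟨Sum.inl_ne_inr, _, ⟨x, hxZ, rfl⟩,
    h.unibranch_left.subset_closure_of_isPreconnected u.2 hD (fun _ hy => (hDZ hy).1)
      (fun _ hy => (hDZ hy).2.1) ⟨x, hxD, hxu⟩,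
    h.unibranch_right.subset_closure_of_isPreconnected m.2 hD (fun _ hy => (hDZ hy).1)
      (fun _ hy => (hDZ hy).2.2) ⟨x, hxD, hxm⟩⟩

theorem componentGraph_eq_intersectionGraph (h : IsCut X P M Z) :
    componentGraph P M Z = intersectionGraph (closedPiece X) := by
  ext v w
  constructor
  · rintro ⟨hvw, D, hD, hDv, hDw⟩
    obtain ⟨x, hx⟩ := (isConnected_of_mem_connComps hD).nonempty
    exact ⟨hvw, ⟨x, h.middle_subset (subset_of_mem_connComps hD hx)⟩, hDv hx, hDw hx⟩
  · rintro ⟨hvw, x, hxv, hxw⟩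
    rcases v with u | m <;> rcases w with u' | m'
    · exact (hvw (congrArg _ <| Subtype.ext <|
        h.unibranch_left.eq_of_mem_closure u.2 u'.2 x.2 hxv hxw)).elim
    · exact h.componentGraph_adj_inl_inr x.2 hxv hxw
    · exact (h.componentGraph_adj_inl_inr x.2 hxw hxv).symm
    · exact (hvw (congrArg _ <| Subtype.ext <|
        h.unibranch_right.eq_of_mem_closure m.2 m'.2 x.2 hxv hxw)).elim

theorem nonempty_connectedComponent_equiv (h : IsCut X P M Z) :
    Nonempty ((componentGraph P M Z).ConnectedComponent ≃ connComps X) := by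
  rw [h.componentGraph_eq_intersectionGraph]
  exact (nonempty_connectedComponent_intersectionGraph_equiv h.locallyFinite_closedPiece
    (fun _ => isClosed_closure.preimage continuous_subtype_val) h.isConnected_closedPiece
    h.iUnion_closedPiece).map (·.trans (connectedComponentsEquivConnComps X))

theorem exists_edgeSet_subset_range (h : IsCut X P M Z) :
    ∃ f : connComps Z → Sym2 (connComps P ⊕ connComps M),
      (componentGraph P M Z).edgeSet ⊆ range f := by
  choose pt hpt using fun D : connComps Z => (isConnected_of_mem_connComps D.2).nonempty
  have hptZ (D : connComps Z) : pt D ∈ X ∩ (closure P ∩ closure M) :=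
    h.inter_closure ▸ subset_of_mem_connComps D.2 (hpt D)
  choose p hp using fun D => h.unibranch_left.exists_mem_closure (hptZ D).1 (hptZ D).2.1
  choose m hm using fun D => h.unibranch_right.exists_mem_closure (hptZ D).1 (hptZ D).2.2
  have hp_eq {D u} (hu : D.1 ⊆ closure u.1) : u = p D := Subtype.ext <|
    h.unibranch_left.eq_of_mem_closure u.2 (p D).2 (hptZ D).1 (hu (hpt D)) (hp D)
  have hm_eq {D v} (hv : D.1 ⊆ closure v.1) : v = m D := Subtype.ext <|
    h.unibranch_right.eq_of_mem_closure v.2 (m D).2 (hptZ D).1 (hv (hpt D)) (hm D)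
  refine ⟨fun D => s(.inl (p D), .inr (m D)), Sym2.ind fun v w => ?_⟩
  rintro ⟨hvw, D, hD, hv, hw⟩
  lift D to connComps Z using hD
  refine ⟨D, ?_⟩
  rcases v with u | v <;> rcases w with u' | w
  · exact (hvw (congrArg _ ((hp_eq hv).trans (hp_eq hw).symm))).elim
  · rw [hp_eq hv, hm_eq hw]
  · rw [hm_eq hv, hp_eq hw, Sym2.eq_swap]
  · exact (hvw (congrArg _ ((hm_eq hv).trans (hm_eq hw).symm))).elim

theorem ncard_add_ncard_le (h : IsCut X P M Z) (hP : (connComps P).Finite)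
    (hM : (connComps M).Finite) (hZ : (connComps Z).Finite) :
    (connComps P).ncard + (connComps M).ncard ≤ (connComps X).ncard + (connComps Z).ncard := by
  have := hP.to_subtype
  have := hM.to_subtype
  have := hZ.to_subtype
  obtain ⟨φ⟩ := h.nonempty_connectedComponent_equiv
  obtain ⟨f, hf⟩ := h.exists_edgeSet_subset_range
  calc (connComps P).ncard + (connComps M).ncard
      = Nat.card (connComps P ⊕ connComps M) := Nat.card_sum.symm
    _ ≤ Nat.card (componentGraph P M Z).ConnectedComponent
          + Nat.card (componentGraph P M Z).edgeSet :=
        card_le_card_connectedComponent_add_card_edgeSet _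
    _ ≤ (connComps X).ncard + (connComps Z).ncard :=
        add_le_add (Nat.card_congr φ).le
          ((Nat.card_mono (finite_range f) hf).trans (Finite.card_range_le f))

end IsCut

end Cut

section Affine

variable {E : Type*} [AddCommGroup E] [Module ℝ E] [TopologicalSpace E] [IsTopologicalAddGroup E]
  [ContinuousSMul ℝ E] {K : AffineSubspace ℝ E} {f : E →ᵃ[ℝ] ℝ} {x y : E}

theorem mem_closure_inter_preimage_of_ne {s : Set ℝ} (hx : x ∈ K) (hy : y ∈ K)
    (hxy : f x ≠ f y) (hfx : f x ∈ closure s) : x ∈ closure (K ∩ f ⁻¹' s) := by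
  have hne : f y - f x ≠ 0 := sub_ne_zero.2 hxy.symm
  -- The section of `f` whose image is the line through `x` and `y`.
  let γ : ℝ → E := fun r => AffineMap.lineMap x y ((r - f x) / (f y - f x))
  have hγ : Continuous γ := AffineMap.lineMap_continuous.comp (by fun_prop)
  have hγx : γ (f x) = x := by simp [γ]
  have hfγ (r : ℝ) : f (γ r) = r := by
    simp only [γ, AffineMap.apply_lineMap, AffineMap.lineMap_apply_ring']
    field_simp
    ring
  have hmaps : MapsTo γ s (K ∩ f ⁻¹' s) := fun r hr =>
    ⟨AffineMap.lineMap_mem _ hx hy, show f (γ r) ∈ s by rwa [hfγ]⟩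
  exact hγx ▸ map_mem_closure hγ hfx hmaps

theorem isCut_of_affineMap [LocallyConvexSpace ℝ E] {T : Set E} (hT : IsOpen T)
    (hf : Continuous f) (hy : y ∈ K) (hfy : f y ≠ 0) :
    IsCut (T ∩ K) (T ∩ K ∩ f ⁻¹' Ioi 0) (T ∩ K ∩ f ⁻¹' Iio 0) (T ∩ K ∩ f ⁻¹' {0}) := by
  have hclosure {s : Set ℝ} (hs : (0 : ℝ) ∈ closure s) {x : E} (hx : x ∈ T ∩ K) (hfx : f x = 0) :
      x ∈ closure (T ∩ K ∩ f ⁻¹' s) := by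
    rw [inter_assoc]
    exact hT.inter_closure ⟨hx.1, mem_closure_inter_preimage_of_ne hx.2 hy
      (hfx.trans_ne hfy.symm) (hfx.symm ▸ hs)⟩
  have hpos {x : E} := hclosure (s := Ioi 0) (by simp) (x := x)
  have hneg {x : E} := hclosure (s := Iio 0) (by simp) (x := x)
  have hunibranch {s : Set ℝ} (hs : Convex ℝ s) : UnibranchAlong (T ∩ K ∩ f ⁻¹' s) (T ∩ K) := by
    rw [inter_assoc]
    exact (unibranchAlong_inter_of_convex hT (K.convex.inter (hs.affine_preimage f))).mono
      inter_subset_left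
  refine ⟨union_subset inter_subset_left inter_subset_left, fun x hx => ?_,
    hunibranch (convex_Ioi 0), hunibranch (convex_Iio 0), ?_⟩
  · rcases lt_trichotomy (f x) 0 with hfx | hfx | hfx
    · exact Or.inr (subset_closure ⟨hx, hfx⟩)
    · exact Or.inl (hpos hx hfx)
    · exact Or.inl (subset_closure ⟨hx, hfx⟩)
  · refine Subset.antisymm (fun x hx => ⟨hx.1, ?_⟩)
      fun x hx => ⟨hx.1, hpos hx.1 hx.2, hneg hx.1 hx.2⟩
    have hge : 0 ≤ f x := closure_minimal (fun z hz => le_of_lt hz.2)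
      (isClosed_Ici.preimage hf) hx.2.1
    have hle : f x ≤ 0 := closure_minimal (fun z hz => le_of_lt hz.2)
      (isClosed_Iic.preimage hf) hx.2.2
    exact hle.antisymm hge

end Affine

section RegularOpen

variable {α : Type*} [TopologicalSpace α] {s t : Set α}

theorem interior_closure_inter_of_isOpen (ht : IsOpen t) (ht_reg : interior (closure t) = t) :
    interior (closure (s ∩ t)) = interior (closure s) ∩ t := by
  apply Subset.antisymm
  · exact subset_inter (interior_mono (closure_mono inter_subset_left))
      ((interior_mono (closure_mono inter_subset_right)).trans ht_reg.subset)
  · refine interior_maximal ?_ (isOpen_interior.inter ht)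
    exact (inter_subset_inter_left t interior_subset).trans ht.closure_inter

theorem mem_interior_closure_congr {x : α} (h : s =ᶠ[𝓝 x] t) :
    x ∈ interior (closure s) ↔ x ∈ interior (closure t) := by
  have hclosure : ∀ᶠ y in 𝓝 x, (y ∈ closure s ↔ y ∈ closure t) := by
    filter_upwards [h.eventuallyEq_nhds] with y hy
    simp only [mem_closure_iff_frequently]
    exact Filter.frequently_congr hy.mem_iff
  simp only [mem_interior_iff_mem_nhds]
  exact Filter.eventually_congr hclosure

end RegularOpen

theorem thickening_sep_subset {d : ℕ} {S : Set (Set (Fin d → ℝ))} {W V : Set (Fin d → ℝ)}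
    (hW : IsOpen W) (hW_reg : interior (closure W) = W) (hWV : Disjoint W V)
    (hS : ∀ C ∈ S, C ⊆ W ∨ C ⊆ V) : thickening {C ∈ S | C ⊆ W} = thickening S ∩ W := by
  have hunion : ⋃ C ∈ {C ∈ S | C ⊆ W}, C = (⋃ C ∈ S, C) ∩ W := by
    apply Subset.antisymm
    · exact iUnion₂_subset fun C hC => subset_inter (subset_biUnion_of_mem (u := id) hC.1) hC.2
    · rintro x ⟨hx, hxW⟩
      obtain ⟨C, hC, hxC⟩ := mem_iUnion₂.1 hx
      have hCW : C ⊆ W := (hS C hC).resolve_right fun hCV => hWV.le_bot ⟨hxW, hCV hxC⟩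
      exact mem_iUnion₂.2 ⟨C, ⟨hC, hCW⟩, hxC⟩
  rw [thickening, hunion, interior_closure_inter_of_isOpen hW hW_reg, thickening]

namespace Arrangement

variable {d n : ℕ} (𝓗 : Arrangement d n) {S : Set (Set (Fin d → ℝ))}

/-- The affine function `x ↦ ⟨normal i, x⟩ - offset i`, whose sign tells the sides of the
hyperplane `H i` apart. -/
def level (i : Fin n) : (Fin d → ℝ) →ᵃ[ℝ] ℝ :=
  (dotProductEquiv ℝ (Fin d) (𝓗.normal i)).toAffineMap - AffineMap.const ℝ _ (𝓗.offset i)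

theorem linear_level (i : Fin n) :
    (𝓗.level i).linear = dotProductEquiv ℝ (Fin d) (𝓗.normal i) := sub_zero _

theorem H_eq_preimage (i : Fin n) : 𝓗.H i = 𝓗.level i ⁻¹' {0} := by
  ext x
  exact sub_eq_zero.symm

theorem pos_eq_preimage (i : Fin n) : 𝓗.pos i = 𝓗.level i ⁻¹' Ioi 0 := by
  ext x
  exact (sub_pos (b := 𝓗.offset i)).symm

theorem neg_eq_preimage (i : Fin n) : 𝓗.neg i = 𝓗.level i ⁻¹' Iio 0 := by
  ext x
  exact (sub_neg (b := 𝓗.offset i)).symm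

theorem continuous_level (i : Fin n) : Continuous (𝓗.level i) :=
  (𝓗.level i).continuous_of_finiteDimensional

theorem isOpenMap_level (i : Fin n) : IsOpenMap (𝓗.level i) := by
  refine AffineMap.isOpenMap_linear_iff.1 (LinearMap.isOpenMap_of_finiteDimensional _ ?_)
  rw [linear_level, LinearMap.surjective_iff_ne_zero]
  exact (LinearEquiv.map_ne_zero_iff _).2 (𝓗.normal_ne i)

theorem interior_closure_preimage_level (i : Fin n) (s : Set ℝ) :
    interior (closure (𝓗.level i ⁻¹' s)) = 𝓗.level i ⁻¹' interior (closure s) := by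
  rw [← (𝓗.isOpenMap_level i).preimage_closure_eq_closure_preimage (𝓗.continuous_level i),
    ← (𝓗.isOpenMap_level i).preimage_interior_eq_interior_preimage (𝓗.continuous_level i)]

theorem isOpen_pos (i : Fin n) : IsOpen (𝓗.pos i) :=
  𝓗.pos_eq_preimage i ▸ isOpen_Ioi.preimage (𝓗.continuous_level i)

theorem isOpen_neg (i : Fin n) : IsOpen (𝓗.neg i) :=
  𝓗.neg_eq_preimage i ▸ isOpen_Iio.preimage (𝓗.continuous_level i)

theorem interior_closure_pos (i : Fin n) : interior (closure (𝓗.pos i)) = 𝓗.pos i := by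
  rw [pos_eq_preimage, interior_closure_preimage_level, closure_Ioi, interior_Ici]

theorem interior_closure_neg (i : Fin n) : interior (closure (𝓗.neg i)) = 𝓗.neg i := by
  rw [neg_eq_preimage, interior_closure_preimage_level, closure_Iio, interior_Iic]

theorem disjoint_pos_neg (i : Fin n) : Disjoint (𝓗.pos i) (𝓗.neg i) :=
  disjoint_left.2 fun _ => lt_asymm (α := ℝ)

theorem subset_pos_or_subset_neg_of_mem_chambers {C : Set (Fin d → ℝ)} (hC : C ∈ 𝓗.chambers)
    (i : Fin n) : C ⊆ 𝓗.pos i ∨ C ⊆ 𝓗.neg i := by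
  obtain ⟨x, -, rfl⟩ := hC
  exact isPreconnected_connectedComponentIn.subset_or_subset (𝓗.isOpen_pos i) (𝓗.isOpen_neg i)
    (𝓗.disjoint_pos_neg i) fun y hy => (lt_or_gt_of_ne (connectedComponentIn_subset _ _ hy i)).symm

theorem stratum_sep_subset_pos (hS : S ⊆ 𝓗.chambers) (e : Fin n) (A : Finset (Fin n)) :
    𝓗.stratum {C ∈ S | C ⊆ 𝓗.pos e} A = 𝓗.stratum S A ∩ 𝓗.pos e := by
  rw [stratum, stratum, inter_right_comm,
    thickening_sep_subset (𝓗.isOpen_pos e) (𝓗.interior_closure_pos e) (𝓗.disjoint_pos_neg e)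
      fun C hC => 𝓗.subset_pos_or_subset_neg_of_mem_chambers (hS hC) e]

theorem stratum_sep_subset_neg (hS : S ⊆ 𝓗.chambers) (e : Fin n) (A : Finset (Fin n)) :
    𝓗.stratum {C ∈ S | C ⊆ 𝓗.neg e} A = 𝓗.stratum S A ∩ 𝓗.neg e := by
  rw [stratum, stratum, inter_right_comm,
    thickening_sep_subset (𝓗.isOpen_neg e) (𝓗.interior_closure_neg e) (𝓗.disjoint_pos_neg e).symm
      fun C hC => (𝓗.subset_pos_or_subset_neg_of_mem_chambers (hS hC) e).symm]

theorem stratum_insert (S : Set (Set (Fin d → ℝ))) (e : Fin n) (A : Finset (Fin n)) :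
    𝓗.stratum S (insert e A) = 𝓗.stratum S A ∩ 𝓗.H e := by
  rw [stratum, stratum, Finset.set_biInter_insert, inter_assoc, inter_comm (𝓗.H e)]

/-- The flat `L_A`, as an affine subspace, so that the stratum `T_S(A)` is an open subset of it. -/
def flat (A : Finset (Fin n)) : AffineSubspace ℝ (Fin d → ℝ) where
  carrier := ⋂ i ∈ A, 𝓗.H i
  smul_vsub_vadd_mem' c x y z hx hy hz := by
    simp only [H_eq_preimage, mem_iInter₂, mem_preimage, mem_singleton_iff] at hx hy hz ⊢
    intro i hi
    rw [AffineMap.map_vadd, map_smul, AffineMap.linearMap_vsub, hx i hi, hy i hi, hz i hi]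
    simp

theorem isCut_stratum (hS : S ⊆ 𝓗.chambers) {e : Fin n} {A : Finset (Fin n)}
    (hA : ¬ (⋂ i ∈ A, 𝓗.H i) ⊆ 𝓗.H e) :
    IsCut (𝓗.stratum S A) (𝓗.stratum {C ∈ S | C ⊆ 𝓗.pos e} A)
      (𝓗.stratum {C ∈ S | C ⊆ 𝓗.neg e} A) (𝓗.stratum S (insert e A)) := by
  obtain ⟨y, hy, hye⟩ := not_subset.1 hA
  rw [H_eq_preimage] at hye
  rw [𝓗.stratum_sep_subset_pos hS, 𝓗.stratum_sep_subset_neg hS, stratum_insert, pos_eq_preimage,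
    neg_eq_preimage, H_eq_preimage]
  exact isCut_of_affineMap (K := 𝓗.flat A) isOpen_interior (𝓗.continuous_level e) hy hye

section GeneralPosition

variable {𝓗} {e : Fin n} {A : Finset (Fin n)}

theorem GeneralPosition.normal_notMem_span (hgp : 𝓗.GeneralPosition) (he : e ∉ A)
    (hA : (⋂ i ∈ insert e A, 𝓗.H i).Nonempty) :
    𝓗.normal e ∉ Submodule.span ℝ (𝓗.normal '' A) := by
  have hcard : (insert e A).card ≤ d := by
    by_contra! hlt
    obtain ⟨B, hBA, hB⟩ := Finset.exists_subset_card_eq (Nat.succ_le_of_lt hlt)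
    exact (hA.mono (biInter_subset_biInter_left hBA)).ne_empty (hgp.2 B hB)
  have hli : LinearIndepOn ℝ 𝓗.normal ↑(insert e A) := hgp.1 _ hcard
  rw [Finset.coe_insert, linearIndepOn_insert he] at hli
  exact hli.2

theorem GeneralPosition.not_iInter_H_subset (hgp : 𝓗.GeneralPosition) (he : e ∉ A)
    (hA : (⋂ i ∈ A, 𝓗.H i).Nonempty) : ¬ (⋂ i ∈ A, 𝓗.H i) ⊆ 𝓗.H e := by
  intro hsub
  obtain ⟨x, hx⟩ := hA
  have hxe : x ∈ ⋂ i ∈ insert e A, 𝓗.H i := by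
    rw [Finset.set_biInter_insert]
    exact ⟨hsub hx, hx⟩
  obtain ⟨φ, hφe, hφA⟩ := Submodule.exists_le_ker_of_notMem (hgp.normal_notMem_span he ⟨x, hxe⟩)
  obtain ⟨v, rfl⟩ := (dotProductEquiv ℝ (Fin d)).surjective φ
  have hmove {i : Fin n} (hi : x ∈ 𝓗.H i) :
      v + x ∈ 𝓗.H i ↔ dotProductEquiv ℝ (Fin d) v (𝓗.normal i) = 0 := by
    rw [H_eq_preimage] at hi ⊢
    have hlinear : (𝓗.level i).linear v = dotProductEquiv ℝ (Fin d) v (𝓗.normal i) := by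
      rw [linear_level]
      exact dotProduct_comm (𝓗.normal i) v
    rw [mem_preimage, mem_singleton_iff, ← vadd_eq_add, AffineMap.map_vadd, hlinear,
      mem_singleton_iff.1 hi, vadd_eq_add, add_zero]
  have hvA : v + x ∈ ⋂ i ∈ A, 𝓗.H i := mem_iInter₂.2 fun i hi =>
    (hmove (mem_iInter₂.1 hx i hi)).2 (hφA (Submodule.subset_span (mem_image_of_mem _ hi)))
  exact hφe ((hmove (hsub hx)).1 (hsub hvA))

end GeneralPosition

/-- The sign vector of a point: on which side of each hyperplane it lies. Its fibres are the faces
of the arrangement, and every stratum is a union of faces. -/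
def signVector (x : Fin d → ℝ) (i : Fin n) : SignType :=
  SignType.sign (𝓗.level i x)

theorem mem_H_iff_signVector_eq_zero {x : Fin d → ℝ} {i : Fin n} :
    x ∈ 𝓗.H i ↔ 𝓗.signVector x i = 0 := by
  rw [H_eq_preimage, signVector, sign_eq_zero_iff, mem_preimage, mem_singleton_iff]

theorem convex_preimage_signVector (σ : Fin n → SignType) : Convex ℝ (𝓗.signVector ⁻¹' {σ}) := by
  have h : 𝓗.signVector ⁻¹' {σ} = ⋂ i, 𝓗.level i ⁻¹' (SignType.sign ⁻¹' {σ i}) := by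
    ext x
    simp only [mem_preimage, mem_singleton_iff, mem_iInter, funext_iff, signVector]
  rw [h]
  exact convex_iInter fun i =>
    (ordConnected_singleton.preimage_mono SignType.sign.monotone).convex.affine_preimage _

theorem mem_chamber_of_signVector_eq {C : Set (Fin d → ℝ)} (hC : C ∈ 𝓗.chambers)
    {x y : Fin d → ℝ} (hxy : 𝓗.signVector x = 𝓗.signVector y) (hx : x ∈ C) : y ∈ C := by
  have hfree : 𝓗.signVector ⁻¹' {𝓗.signVector y} ⊆ 𝓗.free := fun z hz i hzi => by
    refine subset_of_mem_connComps hC hx i ?_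
    rwa [mem_H_iff_signVector_eq_zero, hxy, ← mem_singleton_iff.1 hz,
      ← mem_H_iff_signVector_eq_zero]
  exact subset_of_mem_connComps_of_isPreconnected hC
    (𝓗.convex_preimage_signVector _).isPreconnected hfree ⟨x, hxy, hx⟩ rfl

theorem eventually_signVector_add_eq {x y : Fin d → ℝ} (h : 𝓗.signVector x = 𝓗.signVector y) :
    ∀ᶠ z in 𝓝 x, 𝓗.signVector (z + (y - x)) = 𝓗.signVector z := by
  suffices ∀ i, ∀ᶠ z in 𝓝 x, 𝓗.signVector (z + (y - x)) i = 𝓗.signVector z i by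
    filter_upwards [Filter.eventually_all.2 this] with z hz using funext hz
  intro i
  have hi : SignType.sign (𝓗.level i x) = SignType.sign (𝓗.level i y) := congrFun h i
  by_cases hx : 𝓗.level i x = 0
  · have hy : 𝓗.level i y = 0 := by rwa [hx, sign_zero, eq_comm, sign_eq_zero_iff] at hi
    have hlinear : (𝓗.level i).linear (y - x) = 0 := by
      rw [← vsub_eq_sub, AffineMap.linearMap_vsub, hx, hy, vsub_self]
    refine .of_forall fun z => congrArg SignType.sign ?_
    rw [add_comm, ← vadd_eq_add, AffineMap.map_vadd, hlinear, zero_vadd]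
  · have hy : 𝓗.level i y ≠ 0 := by rwa [← sign_ne_zero, ← hi, sign_ne_zero]
    have hconst {w : Fin d → ℝ} (hw : 𝓗.level i w ≠ 0) :
        ∀ᶠ z in 𝓝 w, 𝓗.signVector z i = 𝓗.signVector w i :=
      ((continuousAt_sign_of_ne_zero hw).comp (𝓗.continuous_level i).continuousAt).preimage_mem_nhds
        ((isOpen_discrete {𝓗.signVector w i}).mem_nhds rfl)
    have htranslate : Filter.Tendsto (fun z => z + (y - x)) (𝓝 x) (𝓝 y) :=
      (continuous_add_const _).tendsto' x y (add_sub_cancel x y)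
    filter_upwards [hconst hx, htranslate.eventually (hconst hy)] with z hzx hzy
    rw [hzx, hzy, h]

theorem mem_thickening_of_signVector_eq (hS : S ⊆ 𝓗.chambers) {x y : Fin d → ℝ}
    (h : 𝓗.signVector x = 𝓗.signVector y) (hx : x ∈ thickening S) : y ∈ thickening S := by
  let τ : (Fin d → ℝ) ≃ₜ (Fin d → ℝ) := Homeomorph.addRight (y - x)
  have hτ : τ x = y := add_sub_cancel x y
  have hgerm : ⋃ C ∈ S, C =ᶠ[𝓝 x] τ ⁻¹' ⋃ C ∈ S, C := by
    filter_upwards [𝓗.eventually_signVector_add_eq h] with z hz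
    refine propext (mem_iUnion₂.trans (Iff.trans ?_ mem_iUnion₂.symm))
    exact exists_congr fun C => exists_congr fun hC =>
      ⟨𝓗.mem_chamber_of_signVector_eq (hS hC) hz.symm, 𝓗.mem_chamber_of_signVector_eq (hS hC) hz⟩
  rw [thickening, mem_interior_closure_congr hgerm, ← τ.preimage_closure, ← τ.preimage_interior,
    mem_preimage, hτ] at hx
  exact hx

theorem finite_connComps_stratum (hS : S ⊆ 𝓗.chambers) (A : Finset (Fin n)) :
    (connComps (𝓗.stratum S A)).Finite := by
  have hinv {x y : Fin d → ℝ} (h : 𝓗.signVector x = 𝓗.signVector y) (hx : x ∈ 𝓗.stratum S A) :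
      y ∈ 𝓗.stratum S A := by
    refine ⟨𝓗.mem_thickening_of_signVector_eq hS h hx.1, mem_iInter₂.2 fun i hi => ?_⟩
    rw [mem_H_iff_signVector_eq_zero, ← h, ← mem_H_iff_signVector_eq_zero]
    exact mem_iInter₂.1 hx.2 i hi
  refine finite_connComps_of_isPreconnected_fibers 𝓗.signVector fun σ => ?_
  rcases eq_empty_or_nonempty (𝓗.stratum S A ∩ 𝓗.signVector ⁻¹' {σ}) with hempty | ⟨x, hx, hxσ⟩
  · exact hempty ▸ isPreconnected_empty
  · rw [inter_eq_right.2 fun y hy => hinv (hxσ.trans hy.symm) hx]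
    exact (𝓗.convex_preimage_signVector σ).isPreconnected

end Arrangement

theorem stmt3_general {d n : ℕ} (𝓗 : Arrangement d n) (S : Set (Set (Fin d → ℝ)))
    (hS : S ⊆ 𝓗.chambers) (e : Fin n) (A : Finset (Fin n)) (hA : ¬ (⋂ i ∈ A, 𝓗.H i) ⊆ 𝓗.H e) :
    Nonempty ((gluingGraph 𝓗 S e A).ConnectedComponent ≃
      (connComps (𝓗.stratum S A))) ∧
    (connComps (𝓗.stratum {C ∈ S | C ⊆ 𝓗.pos e} A)).ncard +
        (connComps (𝓗.stratum {C ∈ S | C ⊆ 𝓗.neg e} A)).ncard ≤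
      (connComps (𝓗.stratum S A)).ncard +
        (connComps (𝓗.stratum S (insert e A))).ncard :=
  have hcut := 𝓗.isCut_stratum hS hA
  have hsep (W : Set (Fin d → ℝ)) : {C ∈ S | C ⊆ W} ⊆ 𝓗.chambers := (sep_subset S _).trans hS
  ⟨hcut.nonempty_connectedComponent_equiv, hcut.ncard_add_ncard_le
    (𝓗.finite_connComps_stratum (hsep _) A) (𝓗.finite_connComps_stratum (hsep _) A)
    (𝓗.finite_connComps_stratum hS _)⟩

/-- (i) The connected components of the gluing graph `Γ_{A,e}` are
in bijection with the connected components of `T_S(A)`; (ii) consequently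
`|conn(T_{S⁺}(A))| + |conn(T_{S⁻}(A))| ≤ |conn(T_S(A))| + |conn(T_S(A ∪ {e}))|`. -/
theorem stmt3 {d n : ℕ} (𝓗 : Arrangement d n) (hgp : 𝓗.GeneralPosition)
    (S : Set (Set (Fin d → ℝ))) (hS : S ⊆ 𝓗.chambers)
    (e : Fin n) (A : Finset (Fin n)) (hA : A ∈ 𝓗.supp S) (he : e ∉ A) :
    Nonempty ((gluingGraph 𝓗 S e A).ConnectedComponent ≃
      (connComps (𝓗.stratum S A))) ∧
    (connComps (𝓗.stratum {C ∈ S | C ⊆ 𝓗.pos e} A)).ncard +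
        (connComps (𝓗.stratum {C ∈ S | C ⊆ 𝓗.neg e} A)).ncard ≤
      (connComps (𝓗.stratum S A)).ncard +
        (connComps (𝓗.stratum S (insert e A))).ncard :=
  stmt3_general 𝓗 S hS e A (hgp.not_iInter_H_subset he (hA.mono inter_subset_right))
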